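/- arXiv:1510.02587 — 5 statements merged into one kernel-verified Lean document; each statement's English description precedes it below -/
import Mathlib

section
/- Let E', M, M', E be categories, and let Ψ : E' → M, Ψ' : E' → M', U : M → E, U' : M' → E be functors such that U ∘ Ψ = U' ∘ Ψ'. Assume U and U' are conservative (reflect isomorphisms), and that Ψ and Ψ' admit fully faithful left adjoints Φ ⊣ Ψ and Φ' ⊣ Ψ' (with counits ε, ε' and invertible units η : id_M ≅ ΨΦ and η' : id_{M'} ≅ Ψ'Φ'). Then the pair (Ψ'Φ : M → M', ΨΦ' : M' → M) forms an adjoint equivalence of categories, whose unit η̂ is determined by η̂⁻¹ = η⁻¹ ∘ (Ψ ε' Φ) : ΨΦ'Ψ'Φ → id_M and whose counit is ε̂ = (η')⁻¹ ∘ (Ψ' ε Φ') : Ψ'ΦΨΦ' → id_{M'}; in particular these two natural transformations satisfy the triangle identities and are both isomorphisms. -/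
/-!
Since `U` and `U'` are conservative, `Ψ` and `Ψ'` both invert exactly the morphisms inverted by
`UΨ = U'Ψ'`. By a triangle identity `Ψ'` inverts the counit `ε'`, because `η'` is invertible; hence
`Ψ` inverts `ε'` too, and symmetrically `Ψ'` inverts `ε`. So the transformations `η⁻¹ ∘ Ψε'Φ` and
`η'⁻¹ ∘ Ψ'εΦ'` are invertible.

Once the unit is inverted, the triangle identity says that `Ψ'Φ` sends `η⁻¹ ∘ Ψε'Φ` to
`(η'⁻¹ ∘ Ψ'εΦ')Ψ'Φ`. Since `Φη⁻¹ = εΦ` and `η'⁻¹Ψ' = Ψ'ε'`, this is the image under `Ψ'` of the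
interchange law for `ε` and `ε'`.
-/

open CategoryTheory

open MorphismProperty (isomorphisms)

section InvertibleUnit

variable {C D : Type*} [Category C] [Category D] {L : C ⥤ D} {R : D ⥤ C} (adj : L ⊣ R)

lemma inv_unit_app_obj (Z : D) [IsIso (adj.unit.app (R.obj Z))] :
    inv (adj.unit.app (R.obj Z)) = R.map (adj.counit.app Z) :=
  IsIso.inv_eq_of_hom_inv_id (adj.right_triangle_components Z)

lemma map_inv_unit_app (X : C) [IsIso (adj.unit.app X)] :
    L.map (inv (adj.unit.app X)) = adj.counit.app (L.obj X) := by
  rw [Functor.map_inv, adj.inv_map_unit]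

lemma isIso_map_counit_app (Z : D) [IsIso (adj.unit.app (R.obj Z))] :
    IsIso (R.map (adj.counit.app Z)) :=
  isIso_of_hom_comp_eq_id _ (adj.right_triangle_components Z)

end InvertibleUnit

lemma inverseImage_comp_isomorphisms {A B C : Type*} [Category A] [Category B] [Category C]
    (F : A ⥤ B) (G : B ⥤ C) [G.ReflectsIsomorphisms] :
    (isomorphisms C).inverseImage (F ⋙ G) = (isomorphisms B).inverseImage F := by
  ext X Y f
  exact isIso_iff_of_reflects_iso (F.map f) G

section Comparison

variable {E' M M' : Type*} [Category E'] [Category M] [Category M']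
  {Ψ : E' ⥤ M} {Ψ' : E' ⥤ M'} {Φ : M ⥤ E'} {Φ' : M' ⥤ E'} (adj : Φ ⊣ Ψ) (adj' : Φ' ⊣ Ψ')

/-- The transformation `η⁻¹ ∘ Ψε'Φ : ΨΦ'Ψ'Φ ⟶ 𝟭 M` of two adjunctions with a common
target category `E'`. Interchanging the two adjunctions gives `η'⁻¹ ∘ Ψ'εΦ'`, so this single
definition provides both the inverse unit and the counit of `coreflectionEquivalence`. -/
noncomputable def coreflectionComparison [IsIso adj.unit] : (Φ ⋙ Ψ') ⋙ (Φ' ⋙ Ψ) ⟶ 𝟭 M where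
  app X := Ψ.map (adj'.counit.app (Φ.obj X)) ≫ (inv adj.unit).app X
  naturality X Y f := by
    have unit_inv_naturality :
        Ψ.map (Φ.map f) ≫ (inv adj.unit).app Y = (inv adj.unit).app X ≫ f :=
      (inv adj.unit).naturality f
    simp only [Functor.comp_map, Functor.id_map, Category.assoc, ← unit_inv_naturality,
      ← Ψ.map_comp_assoc]
    exact congrArg (Ψ.map · ≫ (inv adj.unit).app Y) (adj'.counit_naturality (Φ.map f))

lemma isIso_coreflectionComparison [IsIso adj.unit] [IsIso adj'.unit]
    (hle : (isomorphisms M').inverseImage Ψ' ≤ (isomorphisms M).inverseImage Ψ) :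
    IsIso (coreflectionComparison adj adj') := by
  have (X : M) : IsIso ((coreflectionComparison adj adj').app X) := by
    have : IsIso (Ψ.map (adj'.counit.app (Φ.obj X))) := hle _ (isIso_map_counit_app adj' _)
    exact IsIso.comp_isIso
  exact NatIso.isIso_of_isIso_app _

lemma map_coreflectionComparison_app [IsIso adj.unit] [IsIso adj'.unit] (X : M) :
    (Φ ⋙ Ψ').map ((coreflectionComparison adj adj').app X) =
      (coreflectionComparison adj' adj).app ((Φ ⋙ Ψ').obj X) := by
  have interchange := adj.counit.naturality (adj'.counit.app (Φ.obj X))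
  calc Ψ'.map (Φ.map (Ψ.map (adj'.counit.app (Φ.obj X)) ≫ (inv adj.unit).app X))
      = Ψ'.map (Φ.map (Ψ.map (adj'.counit.app (Φ.obj X))) ≫ adj.counit.app (Φ.obj X)) := by
        rw [NatIso.isIso_inv_app, Φ.map_comp, map_inv_unit_app]
    _ = Ψ'.map (adj.counit.app (Φ'.obj (Ψ'.obj (Φ.obj X))) ≫ adj'.counit.app (Φ.obj X)) :=
        congrArg Ψ'.map interchange
    _ = Ψ'.map (adj.counit.app (Φ'.obj (Ψ'.obj (Φ.obj X)))) ≫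
          (inv adj'.unit).app (Ψ'.obj (Φ.obj X)) := by
        rw [NatIso.isIso_inv_app, inv_unit_app_obj, Ψ'.map_comp]

/-- The adjoint equivalence `(Ψ'Φ, ΨΦ')` between the targets of two functors `Ψ` and `Ψ'` that
invert the same morphisms and have fully faithful left adjoints. The data of `M ≌ M'` include only
the triangle identity for `Ψ'Φ`; the one for `ΨΦ'` is `Equivalence.unit_inverse_comp`. -/
noncomputable def coreflectionEquivalence [IsIso adj.unit] [IsIso adj'.unit]
    (hW : (isomorphisms M).inverseImage Ψ = (isomorphisms M').inverseImage Ψ') : M ≌ M' :=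
  have := isIso_coreflectionComparison adj adj' hW.ge
  have := isIso_coreflectionComparison adj' adj hW.le
  { functor := Φ ⋙ Ψ'
    inverse := Φ' ⋙ Ψ
    unitIso := (asIso (coreflectionComparison adj adj')).symm
    counitIso := asIso (coreflectionComparison adj' adj)
    functor_unitIso_comp X := by
      change (Φ ⋙ Ψ').map ((inv (coreflectionComparison adj adj')).app X) ≫
        (coreflectionComparison adj' adj).app ((Φ ⋙ Ψ').obj X) = 𝟙 _
      rw [← map_coreflectionComparison_app, ← Functor.map_comp, ← NatTrans.comp_app,
        IsIso.inv_hom_id]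
      exact (Φ ⋙ Ψ').map_id X }

end Comparison

theorem stmt0_general {E' M M' : Type*} [Category E'] [Category M] [Category M']
    (Ψ : E' ⥤ M) (Ψ' : E' ⥤ M')
    (hW : (isomorphisms M).inverseImage Ψ = (isomorphisms M').inverseImage Ψ')
    (Φ : M ⥤ E') (Φ' : M' ⥤ E') (adj : Φ ⊣ Ψ) (adj' : Φ' ⊣ Ψ')
    [IsIso adj.unit] [IsIso adj'.unit]
    (ηhatInv : (Φ ⋙ Ψ') ⋙ (Φ' ⋙ Ψ) ⟶ 𝟭 M)
    (hηhatInv : ∀ X : M,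
      ηhatInv.app X = Ψ.map (adj'.counit.app (Φ.obj X)) ≫ (inv adj.unit).app X)
    (εhat : (Φ' ⋙ Ψ) ⋙ (Φ ⋙ Ψ') ⟶ 𝟭 M')
    (hεhat : ∀ Y : M',
      εhat.app Y = Ψ'.map (adj.counit.app (Φ'.obj Y)) ≫ (inv adj'.unit).app Y) :
    ∃ ηhat : 𝟭 M ⟶ (Φ ⋙ Ψ') ⋙ (Φ' ⋙ Ψ),
      ηhat ≫ ηhatInv = 𝟙 (𝟭 M) ∧
      ηhatInv ≫ ηhat = 𝟙 ((Φ ⋙ Ψ') ⋙ (Φ' ⋙ Ψ)) ∧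
      IsIso εhat ∧
      (∀ X : M, (Φ ⋙ Ψ').map (ηhat.app X) ≫ εhat.app ((Φ ⋙ Ψ').obj X)
          = 𝟙 ((Φ ⋙ Ψ').obj X)) ∧
      (∀ Y : M', ηhat.app ((Φ' ⋙ Ψ).obj Y) ≫ (Φ' ⋙ Ψ).map (εhat.app Y)
          = 𝟙 ((Φ' ⋙ Ψ).obj Y)) := by
  obtain rfl : ηhatInv = coreflectionComparison adj adj' := NatTrans.ext (funext hηhatInv)
  obtain rfl : εhat = coreflectionComparison adj' adj := NatTrans.ext (funext hεhat)
  let e : M ≌ M' := coreflectionEquivalence adj adj' hW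
  exact ⟨e.unit, e.unitIso.hom_inv_id, e.unitIso.inv_hom_id, e.counitIso.isIso_hom,
    e.functor_unit_comp, e.unit_inverse_comp⟩

/-- Berger's lemma: given functors `Ψ : E' ⥤ M`, `Ψ' : E' ⥤ M'` with `U ∘ Ψ = U' ∘ Ψ'`,
`U, U'` conservative, and fully faithful left adjoints `Φ ⊣ Ψ`, `Φ' ⊣ Ψ'` (units invertible),
the pair `(Ψ'Φ, ΨΦ')` is an adjoint equivalence with the stated unit and counit. -/
theorem stmt0 {E' M M' E : Type*} [Category E'] [Category M] [Category M'] [Category E]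
    (Ψ : E' ⥤ M) (Ψ' : E' ⥤ M') (U : M ⥤ E) (U' : M' ⥤ E)
    (hcomm : Ψ ⋙ U = Ψ' ⋙ U')
    [U.ReflectsIsomorphisms] [U'.ReflectsIsomorphisms]
    (Φ : M ⥤ E') (Φ' : M' ⥤ E') (adj : Φ ⊣ Ψ) (adj' : Φ' ⊣ Ψ')
    [IsIso adj.unit] [IsIso adj'.unit]
    (ηhatInv : (Φ ⋙ Ψ') ⋙ (Φ' ⋙ Ψ) ⟶ 𝟭 M)
    (hηhatInv : ∀ X : M,
      ηhatInv.app X = Ψ.map (adj'.counit.app (Φ.obj X)) ≫ (inv adj.unit).app X)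
    (εhat : (Φ' ⋙ Ψ) ⋙ (Φ ⋙ Ψ') ⟶ 𝟭 M')
    (hεhat : ∀ Y : M',
      εhat.app Y = Ψ'.map (adj.counit.app (Φ'.obj Y)) ≫ (inv adj'.unit).app Y) :
    ∃ ηhat : 𝟭 M ⟶ (Φ ⋙ Ψ') ⋙ (Φ' ⋙ Ψ),
      ηhat ≫ ηhatInv = 𝟙 (𝟭 M) ∧
      ηhatInv ≫ ηhat = 𝟙 ((Φ ⋙ Ψ') ⋙ (Φ' ⋙ Ψ)) ∧
      IsIso εhat ∧
      (∀ X : M, (Φ ⋙ Ψ').map (ηhat.app X) ≫ εhat.app ((Φ ⋙ Ψ').obj X)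
          = 𝟙 ((Φ ⋙ Ψ').obj X)) ∧
      (∀ Y : M', ηhat.app ((Φ' ⋙ Ψ).obj Y) ≫ (Φ' ⋙ Ψ).map (εhat.app Y)
          = 𝟙 ((Φ' ⋙ Ψ).obj Y)) := by
  refine stmt0_general Ψ Ψ' ?_ Φ Φ' adj adj' ηhatInv hηhatInv εhat hεhat
  rw [← inverseImage_comp_isomorphisms Ψ U, hcomm, inverseImage_comp_isomorphisms Ψ' U']
end

section
/- Let L : B → A with right adjoint R : A → B (unit η, counit ε), and L' : B' → A with right adjoint R' : A → B' (unit η', counit ε'). Let G : B → B' be a functor with G ∘ R = R', and set ζ₁₁ := (ε' L) ∘ (L' G η) : L' ∘ G ⟶ L. Assume that both units η and η' are natural isomorphisms and that G is conservative (reflects isomorphisms). Then: (1) the adjunction (R L' : B' → B) ⊣ G with unit η' and counit η⁻¹ ∘ (R ζ₁₁) is an adjoint equivalence of categories (i.e., its unit and counit are natural isomorphisms); and (2) ζ₁₁ : L' ∘ G ⟶ L is a natural isomorphism. -/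
/-!
The morphism `ζ₁₁ X : L' G X ⟶ L X` is the transpose of `G η_X` under `L' ⊣ G R`, that is,
`η'_{G X} ≫ G R (ζ₁₁ X) = G η_X`. As both units are invertible, so is `G R (ζ₁₁ X)`, hence also
`R (ζ₁₁ X)`, because `G` is conservative. Composition with a morphism that is inverted by a right
adjoint is bijective on morphisms out of every value of the left adjoint. Applied to `L ⊣ R` and
to `L' ⊣ G R`, this shows that composition with `ζ₁₁ X` is bijective on morphisms out of both its
source and its target, so `ζ₁₁ X` is invertible, and with it the counit `η⁻¹ ∘ R ζ₁₁`.
-/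

open CategoryTheory

section RightAdjointInverts

variable {C D E : Type*} [Category C] [Category D] [Category E]

theorem bijective_comp_of_isIso_map_rightAdjoint {F : C ⥤ D} {U : D ⥤ C} (adj : F ⊣ U)
    {Y Z : D} (f : Y ⟶ Z) [IsIso (U.map f)] (X : C) :
    Function.Bijective (fun g : F.obj X ⟶ Y ↦ g ≫ f) := by
  have transpose_comp : adj.homEquiv X Z ∘ (· ≫ f) = (· ≫ U.map f) ∘ adj.homEquiv X Y :=
    funext fun g ↦ adj.homEquiv_naturality_right g f
  rw [← (adj.homEquiv X Z).comp_bijective, transpose_comp]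
  exact ((asIso (U.map f)).homToEquiv.bijective).comp (adj.homEquiv X Y).bijective

theorem isIso_of_isIso_map_rightAdjoints {F₁ : C ⥤ E} {U₁ : E ⥤ C} (adj₁ : F₁ ⊣ U₁)
    {F₂ : D ⥤ E} {U₂ : E ⥤ D} (adj₂ : F₂ ⊣ U₂) {X : C} {Y : D} (f : F₁.obj X ⟶ F₂.obj Y)
    [IsIso (U₁.map f)] [IsIso (U₂.map f)] : IsIso f := by
  obtain ⟨s, hs : s ≫ f = 𝟙 _⟩ :=
    (bijective_comp_of_isIso_map_rightAdjoint adj₂ f Y).surjective (𝟙 _)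
  have hs' : f ≫ s = 𝟙 _ :=
    (bijective_comp_of_isIso_map_rightAdjoint adj₁ f X).injective (by simp [hs])
  exact ⟨s, hs', hs⟩

end RightAdjointInverts

section LeftAdjointComparison

variable {A B B' : Type*} [Category A] [Category B] [Category B']
  {L : B ⥤ A} {R : A ⥤ B} (adj : L ⊣ R) {G : B ⥤ B'} {L' : B' ⥤ A} (adj' : L' ⊣ R ⋙ G)

/-- The comparison `ζ₁₁ = (ε' L) ∘ (L' G η)` between the left adjoints of `R` and of `G ∘ R`. The
equality `G ∘ R = R'` is built into the type of `adj'`, so that no transport is needed. -/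
@[simps]
def leftAdjointComparison : G ⋙ L' ⟶ L where
  app X := L'.map (G.map (adj.unit.app X)) ≫ adj'.counit.app (L.obj X)
  naturality X Y f := by
    have unit_nat : L'.map (G.map f) ≫ L'.map (G.map (adj.unit.app Y)) =
        L'.map (G.map (adj.unit.app X)) ≫ L'.map (G.map (R.map (L.map f))) := by
      simpa only [Functor.map_comp] using
        congrArg (fun g ↦ L'.map (G.map g)) (adj.unit_naturality f).symm
    have counit_nat : L'.map (G.map (R.map (L.map f))) ≫ adj'.counit.app (L.obj Y) =
        adj'.counit.app (L.obj X) ≫ L.map f :=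
      adj'.counit_naturality (L.map f)
    rw [Functor.comp_map, reassoc_of% unit_nat, counit_nat, Category.assoc]

theorem unit_comp_map_leftAdjointComparison (X : B) :
    adj'.unit.app (G.obj X) ≫ G.map (R.map ((leftAdjointComparison adj adj').app X)) =
      G.map (adj.unit.app X) := by
  have transpose := (adj'.homEquiv (G.obj X) (L.obj X)).apply_symm_apply (G.map (adj.unit.app X))
  rwa [adj'.homEquiv_counit, adj'.homEquiv_unit] at transpose

variable [IsIso adj.unit] [IsIso adj'.unit] [G.ReflectsIsomorphisms]

theorem isIso_map_leftAdjointComparison_app (X : B) :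
    IsIso (R.map ((leftAdjointComparison adj adj').app X)) := by
  have : IsIso (G.map (R.map ((leftAdjointComparison adj adj').app X))) :=
    IsIso.of_isIso_fac_left (unit_comp_map_leftAdjointComparison adj adj' X)
  exact isIso_of_reflects_iso _ G

theorem isIso_leftAdjointComparison : IsIso (leftAdjointComparison adj adj') := by
  have isIso_app (X : B) : IsIso ((leftAdjointComparison adj adj').app X) := by
    have isIso_R := isIso_map_leftAdjointComparison_app adj adj' X
    have isIso_GR : IsIso ((R ⋙ G).map ((leftAdjointComparison adj adj').app X)) :=
      G.map_isIso (R.map _)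
    exact isIso_of_isIso_map_rightAdjoints adj' adj _
  exact NatIso.isIso_of_isIso_app _

end LeftAdjointComparison

/-- Given adjunctions `L ⊣ R` (between `B` and `A`) and `L' ⊣ R'` (between `B'` and `A`),
and a conservative functor `G : B ⥤ B'` with `G ∘ R = R'`, if both units `η, η'` are
invertible then the adjunction `(R L' ⊣ G)` with unit `u = η'` and counit
`c = η⁻¹ ∘ (R ζ₁₁)` is an adjoint equivalence (its unit and counit are isomorphisms), and
`ζ₁₁ = (ε' L) ∘ (L' G η) : L' ∘ G ⟶ L` is a natural isomorphism. -/
theorem stmt3 {A B B' : Type*} [Category A] [Category B] [Category B']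
    (L : B ⥤ A) (R : A ⥤ B) (adj : L ⊣ R)
    (L' : B' ⥤ A) (R' : A ⥤ B') (adj' : L' ⊣ R')
    (G : B ⥤ B') (h : R ⋙ G = R')
    [IsIso adj.unit] [IsIso adj'.unit] [G.ReflectsIsomorphisms]
    (ζ₁₁ : G ⋙ L' ⟶ L)
    (hζ : ∀ X : B, ζ₁₁.app X =
      L'.map (G.map (adj.unit.app X)) ≫
        eqToHom (congrArg L'.obj (Functor.congr_obj h (L.obj X))) ≫
        adj'.counit.app (L.obj X))
    (u : 𝟭 B' ⟶ (L' ⋙ R) ⋙ G)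
    (hu : ∀ Y : B', u.app Y =
      adj'.unit.app Y ≫ eqToHom (Functor.congr_obj h (L'.obj Y)).symm)
    (c : G ⋙ (L' ⋙ R) ⟶ 𝟭 B)
    (hc : ∀ X : B, c.app X = R.map (ζ₁₁.app X) ≫ (inv adj.unit).app X) :
    IsIso u ∧ IsIso c ∧ IsIso ζ₁₁ := by
  subst h
  obtain rfl : ζ₁₁ = leftAdjointComparison adj adj' := by
    ext X
    simpa using hζ X
  obtain rfl : u = adj'.unit := by
    ext Y
    simpa using hu Y
  obtain rfl : c = Functor.whiskerRight (leftAdjointComparison adj adj') R ≫ inv adj.unit := by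
    ext X
    simpa using hc X
  have := isIso_leftAdjointComparison adj adj'
  exact ⟨inferInstance, inferInstance, inferInstance⟩
end

section
/- Let A be a category in which every reflexive pair of morphisms admits a coequalizer. Then for any adjunction (L : B → A, R : A → B), the comparison functor K : A → B_{RL} from A to the Eilenberg–Moore category of the associated monad RL is a right adjoint (i.e., K admits a left adjoint). -/
open CategoryTheory Limits

/-!
For an algebra `(M, a)` of the monad `RL`, the pair `L a, ε_{LM} : L R L M ⟶ L M` is reflexive with
common section `L η_M`. Under the bijection `A(L M, X) ≃ B(M, R X)`, the morphisms `f : L M ⟶ X`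
with `L a ≫ f = ε_{LM} ≫ f` correspond exactly to the morphisms of algebras `(M, a) ⟶ K X`: the
transpose of `L a ≫ f` is `a` followed by the transpose `f'` of `f`, while the transpose of
`ε_{LM} ≫ f` is `R f = R L f' ≫ R ε_X`. Hence the coequalizer of the pair represents
`X ↦ Alg((M, a), K X)`, so it is the value at `(M, a)` of a left adjoint of `K`.
-/

section

universe v₁ v₂ u₁ u₂

variable {A : Type u₁} {B : Type u₂} [Category.{v₁} A] [Category.{v₂} B]
  {L : B ⥤ A} {R : A ⥤ B} (adj : L ⊣ R)

theorem homEquiv_counit_app_comp {X Y : A} (f : Y ⟶ X) :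
    adj.homEquiv _ _ (adj.counit.app Y ≫ f) = R.map f := by
  rw [adj.homEquiv_unit, R.map_comp, adj.right_triangle_components_assoc]

theorem map_map_homEquiv_comp_map_counit_app {X : A} {Y : B} (f : L.obj Y ⟶ X) :
    R.map (L.map (adj.homEquiv _ _ f)) ≫ R.map (adj.counit.app X) = R.map f := by
  have transpose_transpose : L.map (adj.homEquiv _ _ f) ≫ adj.counit.app X = f :=
    (adj.homEquiv_counit _ _ _).symm.trans ((adj.homEquiv _ _).symm_apply_apply f)
  rw [← R.map_comp, transpose_transpose]

theorem map_comp_eq_counit_app_comp_iff {X : A} {Y : B} (a : R.obj (L.obj Y) ⟶ Y)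
    (f : L.obj Y ⟶ X) :
    L.map a ≫ f = adj.counit.app (L.obj Y) ≫ f ↔
      R.map (L.map (adj.homEquiv _ _ f)) ≫ R.map (adj.counit.app X) = a ≫ adj.homEquiv _ _ f := by
  rw [map_map_homEquiv_comp_map_counit_app, ← homEquiv_counit_app_comp adj f,
    ← adj.homEquiv_naturality_left, (adj.homEquiv _ _).injective.eq_iff, eq_comm]

/-- Transposition along `L ⊣ R` as a bijection between the morphisms out of `L M` that coequalize
`L a` and `ε_{LM}` and the algebra morphisms from `(M, a)` to `K X`. -/
def coequalizingHomEquiv (M : adj.toMonad.Algebra) (X : A) :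
    { f : L.obj M.A ⟶ X // L.map M.a ≫ f = adj.counit.app (L.obj M.A) ≫ f } ≃
      (M ⟶ (Monad.comparison adj).obj X) where
  toFun f := ⟨adj.homEquiv _ _ f.1, (map_comp_eq_counit_app_comp_iff adj M.a f.1).1 f.2⟩
  invFun g := ⟨(adj.homEquiv _ _).symm g.f, (map_comp_eq_counit_app_comp_iff adj M.a _).2 <|
    ((adj.homEquiv M.A X).apply_symm_apply g.f).symm ▸ g.h⟩
  left_inv f := Subtype.ext ((adj.homEquiv _ _).symm_apply_apply f.1)
  right_inv g := Monad.Algebra.Hom.ext ((adj.homEquiv M.A X).apply_symm_apply g.f)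

/-- The bijection exhibiting the coequalizer of `L a` and `ε_{LM}` as the value at `(M, a)` of a
left adjoint of the comparison functor. Mathlib's
`Monad.MonadicityInternal.comparisonLeftAdjointHomEquiv` requires the morphisms of `A` and `B` to
live in the same universe. -/
noncomputable def coequalizerHomEquiv (M : adj.toMonad.Algebra)
    [HasCoequalizer (L.map M.a) (adj.counit.app (L.obj M.A))] (X : A) :
    (coequalizer (L.map M.a) (adj.counit.app (L.obj M.A)) ⟶ X) ≃
      (M ⟶ (Monad.comparison adj).obj X) :=
  (Cofork.IsColimit.homIso (coequalizerIsCoequalizer _ _) X).trans (coequalizingHomEquiv adj M X)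

theorem coequalizerHomEquiv_comp (M : adj.toMonad.Algebra)
    [HasCoequalizer (L.map M.a) (adj.counit.app (L.obj M.A))] {X Y : A}
    (f : coequalizer (L.map M.a) (adj.counit.app (L.obj M.A)) ⟶ X) (g : X ⟶ Y) :
    coequalizerHomEquiv adj M Y (f ≫ g) =
      coequalizerHomEquiv adj M X f ≫ (Monad.comparison adj).map g := by
  apply Monad.Algebra.Hom.ext
  calc adj.homEquiv M.A Y (coequalizer.π _ _ ≫ f ≫ g)
    _ = adj.homEquiv M.A Y ((coequalizer.π _ _ ≫ f) ≫ g) := by rw [Category.assoc]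
    _ = adj.homEquiv M.A X (coequalizer.π _ _ ≫ f) ≫ R.map g :=
        adj.homEquiv_naturality_right _ _

theorem hasCoequalizer_map_a_counit_app [HasReflexiveCoequalizers A] (M : adj.toMonad.Algebra) :
    HasCoequalizer (L.map M.a) (adj.counit.app (L.obj M.A)) :=
  have section_left : L.map (adj.toMonad.η.app M.A) ≫ L.map M.a = 𝟙 (L.obj M.A) := by
    rw [← L.map_comp, M.unit]
    exact L.map_id M.A
  hasCoequalizer_of_common_section A (L.map (adj.unit.app M.A)) section_left
    (adj.left_triangle_components M.A)

end

theorem stmt6_general {A B : Type*} [Category A] [Category B]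
    (L : B ⥤ A) (R : A ⥤ B) (adj : L ⊣ R)
    [∀ M : adj.toMonad.Algebra, HasCoequalizer (L.map M.a) (adj.counit.app (L.obj M.A))] :
    (Monad.comparison adj).IsRightAdjoint :=
  (Adjunction.adjunctionOfEquivLeft (G := Monad.comparison adj) (fun M => coequalizerHomEquiv adj M)
    fun M _ _ g f => coequalizerHomEquiv_comp adj M f g).isRightAdjoint

/-- If `A` has coequalizers of reflexive pairs then, for any adjunction `L ⊣ R` with
`L : B ⥤ A`, the comparison functor `K : A ⥤ B_{RL}` into the Eilenberg–Moore category of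
the associated monad `RL` is a right adjoint. -/
theorem stmt6 {A B : Type*} [Category A] [Category B] [HasReflexiveCoequalizers A]
    (L : B ⥤ A) (R : A ⥤ B) (adj : L ⊣ R) :
    (Monad.comparison adj).IsRightAdjoint :=
  have := hasCoequalizer_map_a_counit_app adj
  stmt6_general L R adj
end

section
/- Let (L : B → A, R : A → B) be an adjunction with unit η and counit ε, let K : A → B₁ be the comparison functor into the Eilenberg–Moore category B₁ of the monad RL, with forgetful functor U : B₁ → B, and assume K has a left adjoint L₁ with unit η₁ and counit ε₁. Define π := (ε L₁) ∘ (L U η₁) : L ∘ U ⟶ L₁. Then for every RL-algebra (B, μ) in B₁: (1) the parallel pair Lμ, ε_{LB} : LRLB → LB is a reflexive pair (Lη_B is a common section); and (2) the morphism π_{(B,μ)} : LB → L₁(B, μ) is a coequalizer of Lμ and ε_{LB} in A. -/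
open CategoryTheory Limits

/-!
Transposition along `L ⊣ R` matches the morphisms of algebras `(B, μ) ⟶ K X` with the morphisms
`LB ⟶ X` that coequalize `Lμ` and `ε_{LB}`: the compatibility square of the former is the transpose
of the equation defining the latter. The matching is natural in `X`, so the transpose of a universal
arrow from `(B, μ)` to `K` is a coequalizer. The components of `η₁` are universal arrows, and `π`
consists of their transposes.
-/

section

variable {A B : Type*} [Category A] [Category B] {L : B ⥤ A} {R : A ⥤ B} (adj : L ⊣ R)

theorem map_comp_homEquiv_symm_eq_iff {P : B} {X : A} (μ : R.obj (L.obj P) ⟶ P)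
    (f : P ⟶ R.obj X) :
    L.map μ ≫ (adj.homEquiv P X).symm f =
        adj.counit.app (L.obj P) ≫ (adj.homEquiv P X).symm f ↔
      R.map (L.map f) ≫ R.map (adj.counit.app X) = μ ≫ f := by
  have map_transpose : R.map ((adj.homEquiv P X).symm f) =
      R.map (L.map f) ≫ R.map (adj.counit.app X) := by
    rw [adj.homEquiv_counit, R.map_comp]
  calc
    _ ↔ μ ≫ f = 𝟙 (R.obj (L.obj P)) ≫ R.map ((adj.homEquiv P X).symm f) := by
      rw [← adj.homEquiv_naturality_right_square_iff, adj.homEquiv_symm_id]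
    _ ↔ _ := by rw [Category.id_comp, map_transpose, eq_comm]

/-- The transposition bijection between morphisms of algebras `(B, μ) ⟶ K X` and morphisms `LB ⟶ X`
coequalizing `Lμ` and `ε_{LB}`, which compares universal arrows to `K` with coequalizers. -/
def comparisonHomEquiv (b : adj.toMonad.Algebra) (X : A) :
    (b ⟶ (Monad.comparison adj).obj X) ≃
      {g : L.obj b.A ⟶ X // L.map b.a ≫ g = adj.counit.app (L.obj b.A) ≫ g} where
  toFun u := ⟨(adj.homEquiv b.A X).symm u.f, (map_comp_homEquiv_symm_eq_iff adj b.a u.f).2 u.h⟩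
  invFun g :=
    { f := adj.homEquiv b.A X g
      h := (map_comp_homEquiv_symm_eq_iff adj b.a _).1 <| by
        rw [Equiv.symm_apply_apply]
        exact g.2 }
  left_inv u := Monad.Algebra.Hom.ext ((adj.homEquiv b.A X).apply_symm_apply u.f)
  right_inv g := Subtype.ext ((adj.homEquiv b.A X).symm_apply_apply g.1)

variable {adj} {b : adj.toMonad.Algebra} {X : A} (u : b ⟶ (Monad.comparison adj).obj X)

theorem comparisonHomEquiv_naturality_right {Y : A} (h : X ⟶ Y) :
    (comparisonHomEquiv adj b Y (u ≫ (Monad.comparison adj).map h)).1 =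
      (comparisonHomEquiv adj b X u).1 ≫ h :=
  adj.homEquiv_naturality_right_symm u.f h

/-- The cofork on `Lμ` and `ε_{LB}` whose leg is the transpose of `u : (B, μ) ⟶ K X`; it is the
candidate coequalizer when `u` is universal. -/
def comparisonCofork : Cofork (L.map b.a) (adj.counit.app (L.obj b.A)) :=
  Cofork.ofπ (comparisonHomEquiv adj b X u).1 (comparisonHomEquiv adj b X u).2

theorem nonempty_isColimit_comparisonCofork (hu : (StructuredArrow.mk u).IsUniversal) :
    Nonempty (IsColimit (comparisonCofork u)) :=
  ⟨Cofork.IsColimit.ofExistsUnique fun s => by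
    let v := (comparisonHomEquiv adj b s.pt).symm ⟨s.π, s.condition⟩
    have factors_iff (h : X ⟶ s.pt) :
        (comparisonHomEquiv adj b X u).1 ≫ h = s.π ↔ u ≫ (Monad.comparison adj).map h = v := by
      rw [← comparisonHomEquiv_naturality_right, Equiv.eq_symm_apply, Subtype.ext_iff]
    exact (existsUnique_congr factors_iff).2 (hu.existsUnique (StructuredArrow.mk v))⟩

theorem map_unit_comp_map_a (b : adj.toMonad.Algebra) :
    L.map (adj.unit.app b.A) ≫ L.map b.a = 𝟙 (L.obj b.A) :=
  (L.map_comp _ _).symm.trans ((congrArg L.map b.unit).trans (L.map_id b.A))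

end

theorem stmt8_general {A B : Type*} [Category A] [Category B]
    {L : B ⥤ A} {R : A ⥤ B} (adj : L ⊣ R) (b : adj.toMonad.Algebra)
    {X : A} (u : b ⟶ (Monad.comparison adj).obj X) (hu : (StructuredArrow.mk u).IsUniversal)
    (p : L.obj b.A ⟶ X) (hp : p = L.map u.f ≫ adj.counit.app X) :
    (L.map (adj.unit.app b.A) ≫ L.map b.a = 𝟙 (L.obj b.A)) ∧
    (L.map (adj.unit.app b.A) ≫ adj.counit.app (L.obj b.A) = 𝟙 (L.obj b.A)) ∧
    IsReflexivePair (L.map b.a) (adj.counit.app (L.obj b.A)) ∧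
    ∃ w : L.map b.a ≫ p = adj.counit.app (L.obj b.A) ≫ p,
      Nonempty (IsColimit (Cofork.ofπ p w)) := by
  have section_left := map_unit_comp_map_a b
  have section_right := adj.left_triangle_components b.A
  obtain rfl : p = (comparisonHomEquiv adj b X u).1 := hp.trans (adj.homEquiv_counit _ _ _).symm
  exact ⟨section_left, section_right, .mk' _ section_left section_right,
    (comparisonHomEquiv adj b X u).2, nonempty_isColimit_comparisonCofork u hu⟩

/-- For an adjunction `L ⊣ R` with comparison functor `K` into the Eilenberg–Moore category
of the monad `RL`, forgetful functor `U`, a left adjoint `L₁ ⊣ K` with unit `η₁` and counit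
`ε₁`, and `π := (ε L₁) ∘ (L U η₁) : L ∘ U ⟶ L₁`: for every algebra `(B, μ)`, the pair
`(Lμ, ε_{LB})` is reflexive (with common section `Lη_B`) and `π_{(B,μ)}` is a coequalizer
of `Lμ` and `ε_{LB}`. -/
theorem stmt8 {A B : Type*} [Category A] [Category B]
    (L : B ⥤ A) (R : A ⥤ B) (adj : L ⊣ R)
    (L₁ : adj.toMonad.Algebra ⥤ A) (adj₁ : L₁ ⊣ Monad.comparison adj)
    (π : adj.toMonad.forget ⋙ L ⟶ L₁)
    (hπ : ∀ b : adj.toMonad.Algebra, π.app b =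
      L.map (adj.toMonad.forget.map (adj₁.unit.app b)) ≫ adj.counit.app (L₁.obj b)) :
    ∀ b : adj.toMonad.Algebra,
      (L.map (adj.unit.app b.A) ≫ L.map b.a = 𝟙 (L.obj b.A)) ∧
      (L.map (adj.unit.app b.A) ≫ adj.counit.app (L.obj b.A) = 𝟙 (L.obj b.A)) ∧
      IsReflexivePair (L.map b.a) (adj.counit.app (L.obj b.A)) ∧
      ∃ w : L.map b.a ≫ π.app b = adj.counit.app (L.obj b.A) ≫ π.app b,
        Nonempty (IsColimit (Cofork.ofπ (π.app b) w)) := by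
  intro b
  exact stmt8_general adj b (adj₁.unit.app b) (mkInitialOfLeftAdjoint _ adj₁ b) _ (hπ b)
end

section
/- Let R be a commutative ring, A an associative unital R-algebra, and p a prime number such that A has characteristic p. For x ∈ A, let ad(x) denote the R-linear endomorphism of A given by ad(x)(y) = xy − yx (i.e., ad(x) = mulLeft(x) − mulRight(x) in the endomorphism algebra of A). Then for every x ∈ A, the p-th power of ad(x) in the composition algebra of R-linear endomorphisms of A equals ad(x^p): (ad x)^p = ad(x^p). -/
open LinearMap (mulLeft mulRight)

theorem toModuleEnd_injective (R S M : Type*) [Semiring R] [Semiring S] [AddCommMonoid M]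
    [Module R M] [Module S M] [SMulCommClass S R M] [FaithfulSMul S M] :
    Function.Injective (Module.toModuleEnd R (S := S) M) :=
  fun _ _ h ↦ eq_of_smul_eq_smul (LinearMap.congr_fun h)

theorem expChar_moduleEnd_of_faithfulSMul (R S M : Type*) [Semiring R] [Semiring S]
    [AddCommMonoid M] [Module R M] [Module S M] [SMulCommClass S R M] [FaithfulSMul S M]
    (p : ℕ) [ExpChar S p] : ExpChar (Module.End R M) p :=
  expChar_of_injective_ringHom (toModuleEnd_injective R S M) p

theorem stmt12_general {R A : Type*} [CommSemiring R] [Ring A] [Algebra R A]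
    (p n : ℕ) [ExpChar A p] (a b : A) :
    (mulLeft R a - mulRight R b) ^ p ^ n = mulLeft R (a ^ p ^ n) - mulRight R (b ^ p ^ n) := by
  have : ExpChar (Module.End R A) p := expChar_moduleEnd_of_faithfulSMul R A A p
  calc
    (mulLeft R a - mulRight R b) ^ p ^ n = mulLeft R a ^ p ^ n - mulRight R b ^ p ^ n :=
      sub_pow_expChar_pow_of_commute p n (LinearMap.commute_mulLeft_right a b)
    _ = mulLeft R (a ^ p ^ n) - mulRight R (b ^ p ^ n) := by
      rw [LinearMap.pow_mulLeft, LinearMap.pow_mulRight]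

/-- Jacobson's identity: for an associative unital algebra `A` of prime characteristic `p`
over a commutative ring `R`, writing `ad x = mulLeft x - mulRight x` for the commutator
endomorphism, one has `(ad x)^p = ad (x^p)`. -/
theorem stmt12 {R A : Type*} [CommRing R] [Ring A] [Algebra R A]
    (p : ℕ) [Fact p.Prime] [CharP A p] (x : A) :
    (LinearMap.mulLeft R x - LinearMap.mulRight R x) ^ p
      = LinearMap.mulLeft R (x ^ p) - LinearMap.mulRight R (x ^ p) := by
  simpa only [pow_one] using stmt12_general (R := R) p 1 x x
end
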